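/- With the Fock-module operators e_j, f_j defined below and with u = 0, the operator [e_1, f_0] = e_1∘f_0 − f_0∘e_1 on F is the zero operator. -/

import Mathlib

noncomputable section

/-- A partition: a weakly decreasing function `ℕ → ℕ` (0-indexed rows) that takes the
value `0` somewhere (hence eventually). -/
def IsPtn (f : ℕ → ℕ) : Prop := Antitone f ∧ ∃ N, f N = 0

/-- The type of partitions. -/
abbrev Ptn : Type := {f : ℕ → ℕ // IsPtn f}

/-- The Fock space: the free `ℂ`-vector space with basis indexed by all partitions. -/
abbrev FockSp : Type := Ptn →₀ ℂ

namespace Fock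

/-- The number of nonzero parts of a partition (the first 0-indexed row equal to zero). -/
def plen (lam : Ptn) : ℕ := Nat.find lam.2.2

/-- `|λ| = Σ_i λ_i`. -/
def psize (lam : Ptn) : ℕ := ∑ i ∈ Finset.range (plen lam), lam.1 i

/-- A box may be added in (0-indexed) row `i`, i.e. `λ + 1_i` is again a partition. -/
def Addable (lam : Ptn) (i : ℕ) : Prop := ∀ p, p < i → lam.1 i < lam.1 p

instance (lam : Ptn) (i : ℕ) : Decidable (Addable lam i) :=
  inferInstanceAs (Decidable (∀ p, p < i → lam.1 i < lam.1 p))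

/-- A box may be removed from (0-indexed) row `i`, i.e. `λ − 1_i` is again a partition. -/
def Removable (lam : Ptn) (i : ℕ) : Prop := lam.1 (i + 1) < lam.1 i

instance (lam : Ptn) (i : ℕ) : Decidable (Removable lam i) :=
  inferInstanceAs (Decidable (lam.1 (i + 1) < lam.1 i))

/-- The partition `λ + 1_i`. -/
def addBox (lam : Ptn) (i : ℕ) (h : Addable lam i) : Ptn :=
  ⟨Function.update lam.1 i (lam.1 i + 1), by
    constructor
    · intro a b hab
      rw [Function.update_apply, Function.update_apply]
      split_ifs with hb ha ha
      · exact le_rfl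
      · have : a < i := lt_of_le_of_ne (hb ▸ hab) ha
        exact h a this
      · have : lam.1 b ≤ lam.1 i := lam.2.1 (ha ▸ hab)
        omega
      · exact lam.2.1 hab
    · obtain ⟨N, hN⟩ := lam.2.2
      refine ⟨max N (i + 1), ?_⟩
      rw [Function.update_apply, if_neg (by omega : ¬ max N (i + 1) = i)]
      have := lam.2.1 (le_max_left N (i + 1))
      omega⟩

/-- The partition `λ − 1_i`. -/
def remBox (lam : Ptn) (i : ℕ) (h : Removable lam i) : Ptn :=
  ⟨Function.update lam.1 i (lam.1 i - 1), by
    constructor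
    · intro a b hab
      rw [Function.update_apply, Function.update_apply]
      split_ifs with hb ha ha
      · exact le_rfl
      · have : lam.1 i ≤ lam.1 a := lam.2.1 (le_of_lt (lt_of_le_of_ne (hb ▸ hab) ha))
        omega
      · have h1 : lam.1 b ≤ lam.1 (i + 1) := lam.2.1 (by omega : i + 1 ≤ b)
        have h2 : lam.1 (i + 1) < lam.1 i := h
        omega
      · exact lam.2.1 hab
    · obtain ⟨N, hN⟩ := lam.2.2
      refine ⟨max N (i + 1), ?_⟩
      rw [Function.update_apply, if_neg (by omega : ¬ max N (i + 1) = i)]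
      have := lam.2.1 (le_max_left N (i + 1))
      omega⟩

variable (h1 h2 u : ℂ)

/-- The coefficient of `|λ + 1_i⟩` in `e_j |λ⟩` (0-indexed row `i`). -/
def ecoef (j : ℕ) (lam : Ptn) (i : ℕ) : ℂ :=
  (1 / h1) *
  (∏ p ∈ Finset.range i,
    (((((lam.1 i : ℂ) - (lam.1 p : ℂ)) * h1 + (((i : ℂ) - (p : ℂ)) - 1) * h2)
        * (((lam.1 i : ℂ) - (lam.1 p : ℂ) + 1) * h1 + (((i : ℂ) - (p : ℂ)) + 1) * h2))
      / ((((lam.1 i : ℂ) - (lam.1 p : ℂ)) * h1 + ((i : ℂ) - (p : ℂ)) * h2)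
        * (((lam.1 i : ℂ) - (lam.1 p : ℂ) + 1) * h1 + ((i : ℂ) - (p : ℂ)) * h2)))) *
  ((lam.1 i : ℂ) * h1 + (i : ℂ) * h2 + u) ^ j

/-- The coefficient of `|λ − 1_i⟩` in `f_j |λ⟩` (0-indexed row `i`). -/
def fcoef (j : ℕ) (lam : Ptn) (i : ℕ) : ℂ :=
  (-(1 / h1)) *
  ((((lam.1 (i+1) : ℂ) - (lam.1 i : ℂ)) * h1)
      / ((((lam.1 (i+1) : ℂ) - (lam.1 i : ℂ)) + 1) * h1 + h2)) *
  (∏ p ∈ Finset.Icc (i + 1) (plen lam),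
    (((((lam.1 p : ℂ) - (lam.1 i : ℂ) + 1) * h1 + (((p : ℂ) - (i : ℂ)) + 1) * h2)
        * (((lam.1 (p+1) : ℂ) - (lam.1 i : ℂ)) * h1 + ((p : ℂ) - (i : ℂ)) * h2))
      / ((((lam.1 (p+1) : ℂ) - (lam.1 i : ℂ) + 1) * h1 + (((p : ℂ) - (i : ℂ)) + 1) * h2)
        * (((lam.1 p : ℂ) - (lam.1 i : ℂ)) * h1 + ((p : ℂ) - (i : ℂ)) * h2)))) *
  (((lam.1 i : ℂ) - 1) * h1 + (i : ℂ) * h2 + u) ^ j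

/-- `e_j |λ⟩`, a finite sum over the rows where a box can be added (all of which lie in
`{0, …, plen λ}`). -/
def evec (j : ℕ) (lam : Ptn) : FockSp :=
  ∑ i ∈ Finset.range (plen lam + 1),
    if h : Addable lam i then Finsupp.single (addBox lam i h) (ecoef h1 h2 u j lam i) else 0

/-- `f_j |λ⟩`, a finite sum over the rows where a box can be removed (all of which lie in
`{0, …, plen λ − 1}`). -/
def fvec (j : ℕ) (lam : Ptn) : FockSp :=
  ∑ i ∈ Finset.range (plen lam),
    if h : Removable lam i then Finsupp.single (remBox lam i h) (fcoef h1 h2 u j lam i) else 0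

/-- The Fock-module operator `e_j`. -/
def eOp (j : ℕ) : Module.End ℂ FockSp :=
  Finsupp.lsum ℂ fun lam => LinearMap.toSpanSingleton ℂ FockSp (evec h1 h2 u j lam)

/-- The Fock-module operator `f_j`. -/
def fOp (j : ℕ) : Module.End ℂ FockSp :=
  Finsupp.lsum ℂ fun lam => LinearMap.toSpanSingleton ℂ FockSp (fvec h1 h2 u j lam)

/-- `ψ_k := [e_k, f_0]`. -/
def psiOp (k : ℕ) : Module.End ℂ FockSp :=
  eOp h1 h2 u k * fOp h1 h2 u 0 - fOp h1 h2 u 0 * eOp h1 h2 u k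

end Fock

open Polynomial in
/-- Asymptotics of `∏ (1 - b (a + b) / ((z - x p) (z - x p + a)))` at infinity, with denominators
cleared. -/
lemma degree_sq_mul_prod_sub_lt (a b : ℂ) (x : ℕ → ℂ) (n : ℕ) :
    (X ^ 2 * ((∏ p ∈ Finset.range n, (X - C (x p + b)) * (X - C (x p - a - b))) -
        ∏ p ∈ Finset.range n, (X - C (x p)) * (X - C (x p - a))) +
      C (b * (a + b) * n) * ∏ p ∈ Finset.range n, (X - C (x p)) * (X - C (x p - a))).degree
      < ((2 * n : ℕ) : WithBot ℕ) := by
  induction n with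
  | zero => simp
  | succ n ih =>
    rw [Finset.prod_range_succ, Finset.prod_range_succ]
    have hD : (∏ p ∈ Finset.range n, (X - C (x p)) * (X - C (x p - a))).degree
        ≤ ((2 * n : ℕ) : WithBot ℕ) := by
      refine (degree_prod_le _ _).trans ?_
      simp only [degree_mul, degree_X_sub_C]
      simp
      norm_cast; omega
    set D := ∏ p ∈ Finset.range n, (X - C (x p)) * (X - C (x p - a))
    set P := ∏ p ∈ Finset.range n, (X - C (x p + b)) * (X - C (x p - a - b))
    have hl : (C (a - 2 * x n) * X + C (x n * (x n - a))).degree ≤ 1 := degree_linear_le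
    have hd : ((X - C (x n)) * (X - C (x n - a))).degree = 2 := by
      rw [degree_mul, degree_X_sub_C, degree_X_sub_C]; rfl
    have key : X ^ 2 * (P * ((X - C (x n + b)) * (X - C (x n - a - b))) -
          D * ((X - C (x n)) * (X - C (x n - a)))) +
        C (b * (a + b) * ((n + 1 : ℕ) : ℂ)) * (D * ((X - C (x n)) * (X - C (x n - a)))) =
        (X ^ 2 * (P - D) + C (b * (a + b) * n) * D) * ((X - C (x n)) * (X - C (x n - a))) +
        (C (b * (a + b)) * (D * (C (a - 2 * x n) * X + C (x n * (x n - a)))) -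
          C (b * (a + b)) * (X ^ 2 * (P - D) + C (b * (a + b) * n) * D) +
          C (b * (a + b) * (b * (a + b) * n)) * D) := by
      simp only [map_add, map_mul, map_sub, Nat.cast_add, Nat.cast_one, map_one, map_ofNat]
      ring
    rw [key]
    set Q := X ^ 2 * (P - D) + C (b * (a + b) * n) * D
    have hC : ∀ (c : ℂ) (R : ℂ[X]) (m : ℕ), R.degree ≤ m → (C c * R).degree ≤ m := by
      intro c R m h
      refine (degree_mul_le _ _).trans ?_
      calc (C c).degree + R.degree ≤ 0 + (m : WithBot ℕ) := add_le_add degree_C_le h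
        _ = m := zero_add _
    refine (degree_add_le _ _).trans_lt (max_lt ?_ ?_)
    · by_cases hQ : Q = 0
      · simp only [hQ, zero_mul, degree_zero]; exact WithBot.bot_lt_coe _
      · rw [degree_eq_natDegree hQ] at ih
        rw [degree_mul, hd, degree_eq_natDegree hQ]
        norm_cast at ih ⊢
        omega
    · have hlt : ((2 * n + 1 : ℕ) : WithBot ℕ) < ((2 * (n + 1) : ℕ) : WithBot ℕ) := by
        norm_cast; omega
      have hle : ((2 * n : ℕ) : WithBot ℕ) ≤ ((2 * n + 1 : ℕ) : WithBot ℕ) := by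
        norm_cast; omega
      refine lt_of_le_of_lt ?_ hlt
      refine (degree_add_le _ _).trans (max_le ((degree_sub_le _ _).trans (max_le ?_ ?_)) ?_)
      · apply hC
        refine (degree_mul_le _ _).trans ?_
        push_cast at hD ⊢
        exact add_le_add hD hl
      · exact hC _ _ _ (ih.le.trans hle)
      · exact hC _ _ _ (hD.trans hle)

open Polynomial in
/-- The residue theorem for
`z (z - y + a + b) / (z - y) * ∏ (z - x p - b) (z - x p + a + b) / ((z - x p) (z - x p + a))`,
which is regular at `y = x N + b` and has vanishing residue at infinity. -/
lemma sum_residues_eq (a b : ℂ) (x : ℕ → ℂ) (N : ℕ) (y : ℂ) (ha : a ≠ 0) (hb : b ≠ 0)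
    (hab : a + b ≠ 0)
    (hx : ∀ p k, p ≠ k → x p - x k ≠ 0) (hxa : ∀ p k, p ≠ k → x p - x k + a ≠ 0)
    (hy : ∀ k ≤ N, y - x k ≠ 0) (hya : ∀ k ≤ N, y - x k + a ≠ 0)
    (hyN : y = x N + b) (hyb : y = (N + 1) * b) :
    ∑ k ∈ Finset.range (N + 1), (x k - a) * ((y - x k - b) / (y - x k + a)) *
        ∏ p ∈ (Finset.range (N + 1)).erase k, ((x k - x p + b) * (x k - x p - a - b)) /
          ((x k - x p) * (x k - x p - a)) =
      ∑ k ∈ Finset.range (N + 1), x k * ((y - x k - a - b) / (y - x k)) *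
        ∏ p ∈ (Finset.range (N + 1)).erase k, ((x k - x p - b) * (x k - x p + a + b)) /
          ((x k - x p) * (x k - x p + a)) := by
  obtain ⟨P, hP⟩ : ∃ P, P = ∏ p ∈ Finset.range (N + 1),
    ((X - C (x p + b)) * (X - C (x p - a - b)) : ℂ[X]) := ⟨_, rfl⟩
  obtain ⟨D, hD⟩ : ∃ D, D = ∏ p ∈ Finset.range (N + 1),
    ((X - C (x p)) * (X - C (x p - a)) : ℂ[X]) := ⟨_, rfl⟩
  obtain ⟨Q, hQ⟩ : ∃ Q, P = (X - C y) * Q := by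
    apply dvd_iff_isRoot.2
    rw [hP, IsRoot, eval_prod]
    apply Finset.prod_eq_zero (Finset.self_mem_range_succ N)
    simp [hyN]
  have hdeg := degree_sq_mul_prod_sub_lt a b x (N + 1)
  rw [← hP, ← hD] at hdeg
  have hDd : D.degree = ((2 * (N + 1) : ℕ) : WithBot ℕ) := by
    rw [hD, degree_prod]
    simp only [degree_mul, degree_X_sub_C]
    simp
    norm_cast; omega
  have hlow : (X * (P - D)).degree < ((2 * (N + 1) : ℕ) : WithBot ℕ) := by
    by_cases h0 : P - D = 0
    · simp only [h0, mul_zero, degree_zero]; exact WithBot.bot_lt_coe _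
    have h2 : (X ^ 2 * (P - D)).degree ≤ ((2 * (N + 1) : ℕ) : WithBot ℕ) := by
      have : X ^ 2 * (P - D) = (X ^ 2 * (P - D) + C (b * (a + b) * ((N + 1 : ℕ) : ℂ)) * D) -
        C (b * (a + b) * ((N + 1 : ℕ) : ℂ)) * D := by ring
      rw [this]
      refine (degree_sub_le _ _).trans (max_le hdeg.le ?_)
      refine (degree_mul_le _ _).trans ?_
      rw [hDd]
      calc _ ≤ (0 : WithBot ℕ) + ((2 * (N + 1) : ℕ) : WithBot ℕ) :=
            add_le_add degree_C_le le_rfl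
        _ = _ := zero_add _
    rw [degree_mul, degree_eq_natDegree h0] at h2 ⊢
    rw [degree_X_pow] at h2
    rw [degree_X]
    norm_cast at h2 ⊢
    omega
  obtain ⟨T, hT⟩ : ∃ T, T = X * (X - C (y - a - b)) * Q - (X + C (a + b)) * D := ⟨_, rfl⟩
  have hTdeg : ((X - C y) * T).degree < ((2 * (N + 1) : ℕ) : WithBot ℕ) := by
    have : (X - C y) * T = (X ^ 2 * (P - D) + C (b * (a + b) * ((N + 1 : ℕ) : ℂ)) * D) +
        C (a + b - y) * (X * (P - D)) := by
      have e : C (b * (a + b) * ((N + 1 : ℕ) : ℂ)) = (C ((a + b) * y) : ℂ[X]) := by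
        rw [hyb]; push_cast; ring_nf
      rw [e, hT, hQ]
      simp only [map_add, map_mul, map_sub]
      ring
    rw [this]
    refine (degree_add_le _ _).trans_lt (max_lt hdeg ?_)
    refine (degree_mul_le _ _).trans_lt (lt_of_le_of_lt ?_ hlow)
    calc _ ≤ (0 : WithBot ℕ) + (X * (P - D)).degree := add_le_add degree_C_le le_rfl
      _ = _ := zero_add _
  have hTlt : T.degree < ((2 * (N + 1) - 1 : ℕ) : WithBot ℕ) := by
    by_cases h0 : T = 0
    · rw [h0, degree_zero]; exact WithBot.bot_lt_coe _
    · rw [degree_mul, degree_X_sub_C, degree_eq_natDegree h0] at hTdeg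
      rw [degree_eq_natDegree h0]
      norm_cast at hTdeg ⊢
      omega
  let v : ℕ ⊕ ℕ → ℂ := Sum.elim x (fun k => x k - a)
  let s : Finset (ℕ ⊕ ℕ) := (Finset.range (N + 1)).disjSum (Finset.range (N + 1))
  have hcard : s.card = 2 * (N + 1) := by
    simp [s, Finset.card_disjSum]; ring
  have hv : Set.InjOn v s := by
    apply Function.Injective.injOn
    rintro (p | p) (k | k) h <;> simp only [v, Sum.elim_inl, Sum.elim_inr] at h <;>
      by_cases hpk : p = k
    · rw [hpk]
    · exact absurd (sub_eq_zero.2 h) (hx p k hpk)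
    · subst hpk; exact absurd (by linear_combination h) ha
    · exact absurd (by linear_combination h) (hxa p k hpk)
    · subst hpk; exact absurd (by linear_combination -h) ha
    · exact absurd (by linear_combination -h) (hxa k p (Ne.symm hpk))
    · rw [hpk]
    · exact absurd (by linear_combination h) (hx p k hpk)
  have hsum := Lagrange.coeff_eq_sum hv (P := T) (by
    rw [hcard]; refine hTlt.trans_le ?_; norm_cast; omega)
  rw [hcard, coeff_eq_zero_of_degree_lt hTlt, Finset.sum_disjSum] at hsum
  have hinl : ∀ k, s.erase (Sum.inl k) =
      ((Finset.range (N + 1)).erase k).disjSum (Finset.range (N + 1)) := by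
    intro k; ext (j | j) <;> simp [s]
  have hinr : ∀ k, s.erase (Sum.inr k) =
      (Finset.range (N + 1)).disjSum ((Finset.range (N + 1)).erase k) := by
    intro k; ext (j | j) <;> simp [s]
  have hTe : ∀ z, D.eval z = 0 → z - y ≠ 0 →
      T.eval z = z * ((z - y + a + b) / (z - y)) * P.eval z := by
    intro z hz hzy
    rw [hT, hQ]
    simp only [eval_sub, eval_mul, eval_X, eval_C, eval_add, hz]
    field_simp
    ring
  have hDe : ∀ k ∈ Finset.range (N + 1), D.eval (x k) = 0 ∧ D.eval (x k - a) = 0 := by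
    intro k hk
    constructor <;>
    · rw [hD, eval_prod]
      exact Finset.prod_eq_zero hk (by simp)
  have hL : ∀ k ∈ Finset.range (N + 1),
      T.eval (v (Sum.inl k)) / ∏ j ∈ s.erase (Sum.inl k), (v (Sum.inl k) - v j) =
      -(b * (a + b) / a) * (x k * ((y - x k - a - b) / (y - x k)) *
        ∏ p ∈ (Finset.range (N + 1)).erase k, ((x k - x p - b) * (x k - x p + a + b)) /
          ((x k - x p) * (x k - x p + a))) := by
    intro k hk
    have hyk := hy k (Nat.lt_succ_iff.1 (Finset.mem_range.1 hk))
    have hyk' : x k - y ≠ 0 := by intro h; exact hyk (by linear_combination -h)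
    rw [hinl, Finset.prod_disjSum]
    simp only [v, Sum.elim_inl, Sum.elim_inr]
    rw [hTe _ (hDe k hk).1 hyk', hP, eval_prod, ← Finset.mul_prod_erase _ _ hk,
      ← Finset.mul_prod_erase _ (fun p => x k - (x p - a)) hk, Finset.prod_div_distrib,
      Finset.prod_mul_distrib (f := fun p => x k - x p)]
    have e1 : ∏ p ∈ (Finset.range (N + 1)).erase k,
        eval (x k) ((X - C (x p + b)) * (X - C (x p - a - b))) =
        ∏ p ∈ (Finset.range (N + 1)).erase k, (x k - x p - b) * (x k - x p + a + b) :=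
      Finset.prod_congr rfl fun p _ => by
        simp only [eval_mul, eval_sub, eval_X, eval_C]; ring
    have e2 : ∏ p ∈ (Finset.range (N + 1)).erase k, (x k - (x p - a)) =
        ∏ p ∈ (Finset.range (N + 1)).erase k, (x k - x p + a) :=
      Finset.prod_congr rfl fun p _ => by ring
    have n1 : ∏ p ∈ (Finset.range (N + 1)).erase k, (x k - x p) ≠ 0 :=
      Finset.prod_ne_zero_iff.2 fun p hp => hx _ _ (Finset.ne_of_mem_erase hp).symm
    have n2 : ∏ p ∈ (Finset.range (N + 1)).erase k, (x k - x p + a) ≠ 0 :=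
      Finset.prod_ne_zero_iff.2 fun p hp => hxa _ _ (Finset.ne_of_mem_erase hp).symm
    rw [e1, e2]
    simp only [eval_mul, eval_sub, eval_X, eval_C]
    generalize ∏ p ∈ (Finset.range (N + 1)).erase k, (x k - x p) = A at *
    generalize ∏ p ∈ (Finset.range (N + 1)).erase k, (x k - x p + a) = B at *
    have e3 : x k - (x k - a) = a := by ring
    rw [e3]
    field_simp
    ring
  have hR : ∀ k ∈ Finset.range (N + 1),
      T.eval (v (Sum.inr k)) / ∏ j ∈ s.erase (Sum.inr k), (v (Sum.inr k) - v j) =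
      (b * (a + b) / a) * ((x k - a) * ((y - x k - b) / (y - x k + a)) *
        ∏ p ∈ (Finset.range (N + 1)).erase k, ((x k - x p + b) * (x k - x p - a - b)) /
          ((x k - x p) * (x k - x p - a))) := by
    intro k hk
    have hyk := hya k (Nat.lt_succ_iff.1 (Finset.mem_range.1 hk))
    have hyk' : x k - a - y ≠ 0 := by intro h; exact hyk (by linear_combination -h)
    rw [hinr, Finset.prod_disjSum]
    simp only [v, Sum.elim_inl, Sum.elim_inr]
    rw [hTe _ (hDe k hk).2 hyk', hP, eval_prod, ← Finset.mul_prod_erase _ _ hk,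
      ← Finset.mul_prod_erase _ (fun p => x k - a - x p) hk, Finset.prod_div_distrib,
      Finset.prod_mul_distrib (f := fun p => x k - x p)]
    have e1 : ∏ p ∈ (Finset.range (N + 1)).erase k,
        eval (x k - a) ((X - C (x p + b)) * (X - C (x p - a - b))) =
        ∏ p ∈ (Finset.range (N + 1)).erase k, (x k - x p + b) * (x k - x p - a - b) :=
      Finset.prod_congr rfl fun p _ => by
        simp only [eval_mul, eval_sub, eval_X, eval_C]; ring
    have e2 : ∏ p ∈ (Finset.range (N + 1)).erase k, (x k - a - x p) =
        ∏ p ∈ (Finset.range (N + 1)).erase k, (x k - x p - a) :=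
      Finset.prod_congr rfl fun p _ => by ring
    have e4 : ∏ p ∈ (Finset.range (N + 1)).erase k, (x k - a - (x p - a)) =
        ∏ p ∈ (Finset.range (N + 1)).erase k, (x k - x p) :=
      Finset.prod_congr rfl fun p _ => by ring
    have n1 : ∏ p ∈ (Finset.range (N + 1)).erase k, (x k - x p) ≠ 0 :=
      Finset.prod_ne_zero_iff.2 fun p hp => hx _ _ (Finset.ne_of_mem_erase hp).symm
    have n2 : ∏ p ∈ (Finset.range (N + 1)).erase k, (x k - x p - a) ≠ 0 :=
      Finset.prod_ne_zero_iff.2 fun p hp h => hxa _ _ (Finset.ne_of_mem_erase hp)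
        (by linear_combination -h)
    rw [e1, e2, e4]
    simp only [eval_mul, eval_sub, eval_X, eval_C]
    generalize ∏ p ∈ (Finset.range (N + 1)).erase k, (x k - x p) = A at *
    generalize ∏ p ∈ (Finset.range (N + 1)).erase k, (x k - x p - a) = B at *
    have e3 : x k - a - x k = -a := by ring
    rw [e3]
    field_simp
    ring
  rw [Finset.sum_congr rfl hL, Finset.sum_congr rfl hR, ← Finset.mul_sum, ← Finset.mul_sum] at hsum
  have hc : b * (a + b) / a ≠ 0 := div_ne_zero (mul_ne_zero hb hab) ha
  apply mul_left_cancel₀ hc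
  linear_combination -hsum

namespace Fock

/-- Position of the row `i` of an integer sequence: `a_i h1 + i h2`. -/
def rowPos (h1 h2 : ℂ) (a : ℕ → ℤ) (i : ℕ) : ℂ := a i * h1 + i * h2

/-- The coefficient of `e_1` (at `u = 0`), extended to integer sequences. -/
def addCoef (h1 h2 : ℂ) (a : ℕ → ℤ) (i : ℕ) : ℂ :=
  (1 / h1) * (∏ p ∈ Finset.range i,
    ((rowPos h1 h2 a i - rowPos h1 h2 a p - h2) *
        (rowPos h1 h2 a i - rowPos h1 h2 a p + h1 + h2)) /
      ((rowPos h1 h2 a i - rowPos h1 h2 a p) *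
        (rowPos h1 h2 a i - rowPos h1 h2 a p + h1))) * rowPos h1 h2 a i

/-- The coefficient of `f_0`, truncated after row `N` and extended to integer sequences. -/
def remCoef (h1 h2 : ℂ) (N : ℕ) (a : ℕ → ℤ) (i : ℕ) : ℂ :=
  (-(1 / h1)) * ((((N : ℂ) + 1) * h2 - rowPos h1 h2 a i - h2) /
      (((N : ℂ) + 1) * h2 - rowPos h1 h2 a i + h1)) *
    ∏ p ∈ Finset.Icc (i + 1) N,
      ((rowPos h1 h2 a i - rowPos h1 h2 a p + h2) *
          (rowPos h1 h2 a i - rowPos h1 h2 a p - h1 - h2)) /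
        ((rowPos h1 h2 a i - rowPos h1 h2 a p) *
          (rowPos h1 h2 a i - rowPos h1 h2 a p - h1))

section Generic

variable {h1 h2 : ℂ}

lemma rowPos_update_self (a : ℕ → ℤ) (i : ℕ) (c : ℤ) :
    rowPos h1 h2 (a + Pi.single i c) i = rowPos h1 h2 a i + c * h1 := by
  simp [rowPos]; ring

lemma rowPos_update_of_ne (a : ℕ → ℤ) {i p : ℕ} (c : ℤ) (h : p ≠ i) :
    rowPos h1 h2 (a + Pi.single i c) p = rowPos h1 h2 a p := by
  simp [rowPos, h]

lemma prod_erase_rowPos_update (a : ℕ → ℤ) (i : ℕ) (c : ℤ) (s : Finset ℕ) (g : ℂ → ℂ) :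
    ∏ p ∈ s.erase i, g (rowPos h1 h2 (a + Pi.single i c) p) =
      ∏ p ∈ s.erase i, g (rowPos h1 h2 a p) :=
  Finset.prod_congr rfl fun p hp => by
    rw [rowPos_update_of_ne a c (Finset.ne_of_mem_erase hp)]

lemma rowPos_sub_add_ne_zero
    (hgen : ∀ a b : ℤ, ¬(a = 0 ∧ b = 0) → (a : ℂ) * h1 + (b : ℂ) * h2 ≠ 0)
    (a : ℕ → ℤ) {p k : ℕ} (h : p ≠ k) (c : ℤ) :
    rowPos h1 h2 a p - rowPos h1 h2 a k + c * h1 ≠ 0 := by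
  have := hgen (a p - a k + c) (p - k) (by omega)
  intro h0
  apply this
  rw [← h0, rowPos, rowPos]
  push_cast
  ring

lemma mul_sub_rowPos_add_ne_zero
    (hgen : ∀ a b : ℤ, ¬(a = 0 ∧ b = 0) → (a : ℂ) * h1 + (b : ℂ) * h2 ≠ 0)
    (a : ℕ → ℤ) {N k : ℕ} (h : k ≤ N) (c : ℤ) :
    ((N : ℂ) + 1) * h2 - rowPos h1 h2 a k + c * h1 ≠ 0 := by
  have := hgen (- a k + c) (N + 1 - k) (by omega)
  intro h0
  apply this
  rw [← h0, rowPos]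
  push_cast
  ring

lemma prod_erase_eq_mul_prod_Icc (g : ℕ → ℂ) {N k : ℕ} (hk : k ≤ N) :
    ∏ p ∈ (Finset.range (N + 1)).erase k, g p =
      (∏ p ∈ Finset.range k, g p) * ∏ p ∈ Finset.Icc (k + 1) N, g p := by
  rw [← Finset.prod_union]
  · congr 1
    ext j
    simp only [Finset.mem_erase, Finset.mem_range, Finset.mem_union, Finset.mem_Icc]
    omega
  · rw [Finset.disjoint_left]
    intro j
    simp only [Finset.mem_range, Finset.mem_Icc]
    omega

lemma remCoef_mul_addCoef_self (a : ℕ → ℤ) {N k : ℕ} (hk : k ≤ N) :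
    remCoef h1 h2 N a k * addCoef h1 h2 (a + Pi.single k (-1)) k =
      -(1 / h1 ^ 2) * ((rowPos h1 h2 a k - h1) *
        ((((N : ℂ) + 1) * h2 - rowPos h1 h2 a k - h2) /
          (((N : ℂ) + 1) * h2 - rowPos h1 h2 a k + h1)) *
        ∏ p ∈ (Finset.range (N + 1)).erase k,
          ((rowPos h1 h2 a k - rowPos h1 h2 a p + h2) *
            (rowPos h1 h2 a k - rowPos h1 h2 a p - h1 - h2)) /
          ((rowPos h1 h2 a k - rowPos h1 h2 a p) *
            (rowPos h1 h2 a k - rowPos h1 h2 a p - h1))) := by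
  rw [prod_erase_eq_mul_prod_Icc _ hk, remCoef, addCoef, rowPos_update_self]
  have : ∀ p ∈ Finset.range k,
      ((rowPos h1 h2 a k + ((-1 : ℤ) : ℂ) * h1 - rowPos h1 h2 (a + Pi.single k (-1)) p - h2) *
        (rowPos h1 h2 a k + ((-1 : ℤ) : ℂ) * h1 - rowPos h1 h2 (a + Pi.single k (-1)) p
          + h1 + h2)) /
      ((rowPos h1 h2 a k + ((-1 : ℤ) : ℂ) * h1 - rowPos h1 h2 (a + Pi.single k (-1)) p) *
        (rowPos h1 h2 a k + ((-1 : ℤ) : ℂ) * h1 - rowPos h1 h2 (a + Pi.single k (-1)) p + h1)) =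
      ((rowPos h1 h2 a k - rowPos h1 h2 a p + h2) *
            (rowPos h1 h2 a k - rowPos h1 h2 a p - h1 - h2)) /
          ((rowPos h1 h2 a k - rowPos h1 h2 a p) *
            (rowPos h1 h2 a k - rowPos h1 h2 a p - h1)) := by
    intro p hp
    rw [rowPos_update_of_ne _ _ (Finset.mem_range.1 hp).ne]
    push_cast
    congr 1 <;> ring
  rw [Finset.prod_congr rfl this]
  push_cast
  ring

lemma addCoef_mul_remCoef_self (a : ℕ → ℤ) {N k : ℕ} (hk : k ≤ N) :
    addCoef h1 h2 a k * remCoef h1 h2 N (a + Pi.single k 1) k =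
      -(1 / h1 ^ 2) * (rowPos h1 h2 a k *
        ((((N : ℂ) + 1) * h2 - rowPos h1 h2 a k - h1 - h2) /
          (((N : ℂ) + 1) * h2 - rowPos h1 h2 a k)) *
        ∏ p ∈ (Finset.range (N + 1)).erase k,
          ((rowPos h1 h2 a k - rowPos h1 h2 a p - h2) *
            (rowPos h1 h2 a k - rowPos h1 h2 a p + h1 + h2)) /
          ((rowPos h1 h2 a k - rowPos h1 h2 a p) *
            (rowPos h1 h2 a k - rowPos h1 h2 a p + h1))) := by
  rw [prod_erase_eq_mul_prod_Icc _ hk, remCoef, addCoef, rowPos_update_self]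
  have : ∀ p ∈ Finset.Icc (k + 1) N,
      ((rowPos h1 h2 a k + ((1 : ℤ) : ℂ) * h1 - rowPos h1 h2 (a + Pi.single k 1) p + h2) *
        (rowPos h1 h2 a k + ((1 : ℤ) : ℂ) * h1 - rowPos h1 h2 (a + Pi.single k 1) p
          - h1 - h2)) /
      ((rowPos h1 h2 a k + ((1 : ℤ) : ℂ) * h1 - rowPos h1 h2 (a + Pi.single k 1) p) *
        (rowPos h1 h2 a k + ((1 : ℤ) : ℂ) * h1 - rowPos h1 h2 (a + Pi.single k 1) p - h1)) =
      ((rowPos h1 h2 a k - rowPos h1 h2 a p - h2) *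
            (rowPos h1 h2 a k - rowPos h1 h2 a p + h1 + h2)) /
          ((rowPos h1 h2 a k - rowPos h1 h2 a p) *
            (rowPos h1 h2 a k - rowPos h1 h2 a p + h1)) := by
    intro p hp
    rw [rowPos_update_of_ne _ _ (by have := (Finset.mem_Icc.1 hp).1; omega)]
    push_cast
    congr 1 <;> ring
  rw [Finset.prod_congr rfl this]
  have e1 : ((N : ℂ) + 1) * h2 - (rowPos h1 h2 a k + ((1 : ℤ) : ℂ) * h1) - h2 =
    ((N : ℂ) + 1) * h2 - rowPos h1 h2 a k - h1 - h2 := by push_cast; ring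
  have e2 : ((N : ℂ) + 1) * h2 - (rowPos h1 h2 a k + ((1 : ℤ) : ℂ) * h1) + h1 =
    ((N : ℂ) + 1) * h2 - rowPos h1 h2 a k := by push_cast; ring
  rw [e1, e2]
  ring

lemma sum_diagonal_eq
    (hgen : ∀ a b : ℤ, ¬(a = 0 ∧ b = 0) → (a : ℂ) * h1 + (b : ℂ) * h2 ≠ 0)
    (a : ℕ → ℤ) {N : ℕ} (hN : a N = 0) :
    ∑ k ∈ Finset.range (N + 1),
        remCoef h1 h2 N a k * addCoef h1 h2 (a + Pi.single k (-1)) k =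
      ∑ k ∈ Finset.range (N + 1),
        addCoef h1 h2 a k * remCoef h1 h2 N (a + Pi.single k 1) k := by
  rw [Finset.sum_congr rfl fun k hk =>
      remCoef_mul_addCoef_self a (Nat.lt_succ_iff.1 (Finset.mem_range.1 hk)),
    Finset.sum_congr rfl fun k hk =>
      addCoef_mul_remCoef_self a (Nat.lt_succ_iff.1 (Finset.mem_range.1 hk)),
    ← Finset.mul_sum, ← Finset.mul_sum]
  congr 1
  apply sum_residues_eq
  · simpa using hgen 1 0 (by simp)
  · simpa using hgen 0 1 (by simp)
  · simpa using hgen 1 1 (by simp)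
  · intro p k h
    simpa using rowPos_sub_add_ne_zero hgen a h 0
  · intro p k h
    simpa using rowPos_sub_add_ne_zero hgen a h 1
  · intro k h
    simpa using mul_sub_rowPos_add_ne_zero hgen a h 0
  · intro k h
    simpa using mul_sub_rowPos_add_ne_zero hgen a h 1
  · simp [rowPos, hN]; ring
  · rfl

lemma addCoef_congr {a a' : ℕ → ℤ} {i : ℕ} (h : ∀ p ≤ i, a p = a' p) :
    addCoef h1 h2 a i = addCoef h1 h2 a' i := by
  have hr : ∀ p ≤ i, rowPos h1 h2 a p = rowPos h1 h2 a' p := fun p hp => by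
    rw [rowPos, rowPos, h p hp]
  rw [addCoef, addCoef, hr i le_rfl]
  congr 2
  exact Finset.prod_congr rfl fun p hp => by rw [hr p (Finset.mem_range.1 hp).le]

lemma remCoef_congr {N : ℕ} {a a' : ℕ → ℤ} {i : ℕ} (h : ∀ p, i ≤ p → a p = a' p) :
    remCoef h1 h2 N a i = remCoef h1 h2 N a' i := by
  have hr : ∀ p, i ≤ p → rowPos h1 h2 a p = rowPos h1 h2 a' p := fun p hp => by
    rw [rowPos, rowPos, h p hp]
  rw [remCoef, remCoef, hr i le_rfl]
  congr 1
  exact Finset.prod_congr rfl fun p hp => by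
    rw [hr p (by have := (Finset.mem_Icc.1 hp).1; omega)]

lemma remCoef_mul_addCoef_comm
    (hgen : ∀ a b : ℤ, ¬(a = 0 ∧ b = 0) → (a : ℂ) * h1 + (b : ℂ) * h2 ≠ 0)
    (a : ℕ → ℤ) {N i k : ℕ} (hi : i ≤ N) (hik : i ≠ k) :
    remCoef h1 h2 N a k * addCoef h1 h2 (a + Pi.single k (-1)) i =
      addCoef h1 h2 a i * remCoef h1 h2 N (a + Pi.single i 1) k := by
  rcases lt_or_gt_of_ne hik with h | h
  · rw [addCoef_congr (a' := a), remCoef_congr (a := a + _) (a' := a), mul_comm]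
    · intro p hp
      simp [show p ≠ i by omega]
    · intro p hp
      simp [show p ≠ k by omega]
  · have hk1 : k ∈ Finset.range i := Finset.mem_range.2 h
    have hi1 : i ∈ Finset.Icc (k + 1) N := Finset.mem_Icc.2 ⟨h, hi⟩
    simp only [remCoef, addCoef]
    rw [rowPos_update_of_ne a (-1) hik, rowPos_update_of_ne a 1 hik.symm]
    rw [← Finset.mul_prod_erase _ _ hk1, ← Finset.mul_prod_erase _ _ hk1,
      ← Finset.mul_prod_erase _ _ hi1, ← Finset.mul_prod_erase _ _ hi1]
    rw [prod_erase_rowPos_update a k (-1) _ fun z => ((rowPos h1 h2 a i - z - h2) *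
          (rowPos h1 h2 a i - z + h1 + h2)) / ((rowPos h1 h2 a i - z) *
          (rowPos h1 h2 a i - z + h1)),
      prod_erase_rowPos_update a i 1 _ fun z => ((rowPos h1 h2 a k - z + h2) *
          (rowPos h1 h2 a k - z - h1 - h2)) / ((rowPos h1 h2 a k - z) *
          (rowPos h1 h2 a k - z - h1)),
      rowPos_update_self, rowPos_update_self]
    have n1 := rowPos_sub_add_ne_zero hgen a hik 0
    have n2 := rowPos_sub_add_ne_zero hgen a hik 1
    have n3 := rowPos_sub_add_ne_zero hgen a hik 2
    generalize (Finset.prod ((Finset.range i).erase k) _ : ℂ) = A at *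
    generalize (Finset.prod ((Finset.Icc (k + 1) N).erase i) _ : ℂ) = B at *
    generalize ((N : ℂ) + 1) * h2 - rowPos h1 h2 a k - h2 = C1 at *
    generalize ((N : ℂ) + 1) * h2 - rowPos h1 h2 a k + h1 = C2 at *
    generalize rowPos h1 h2 a i = x at *
    generalize rowPos h1 h2 a k = y at *
    push_cast at *
    have key : ((y - x + h2) * (y - x - h1 - h2)) / ((y - x) * (y - x - h1)) *
        (((x - (y + -1 * h1) - h2) * (x - (y + -1 * h1) + h1 + h2)) /
          ((x - (y + -1 * h1)) * (x - (y + -1 * h1) + h1))) =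
        ((x - y - h2) * (x - y + h1 + h2)) / ((x - y) * (x - y + h1)) *
        (((y - (x + 1 * h1) + h2) * (y - (x + 1 * h1) - h1 - h2)) /
          ((y - (x + 1 * h1)) * (y - (x + 1 * h1) - h1))) := by
      rw [div_mul_div_comm, div_mul_div_comm, div_eq_div_iff]
      · ring
      · have : (y - x) * (y - x - h1) * ((x - (y + -1 * h1)) * (x - (y + -1 * h1) + h1)) =
          (x - y + 0 * h1) * (x - y + 1 * h1) * ((x - y + 1 * h1) * (x - y + 2 * h1)) := by ring
        rw [this]
        exact mul_ne_zero (mul_ne_zero n1 n2) (mul_ne_zero n2 n3)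
      · have : (x - y) * (x - y + h1) * ((y - (x + 1 * h1)) * (y - (x + 1 * h1) - h1)) =
          (x - y + 0 * h1) * (x - y + 1 * h1) * ((x - y + 1 * h1) * (x - y + 2 * h1)) := by ring
        rw [this]
        exact mul_ne_zero (mul_ne_zero n1 n2) (mul_ne_zero n2 n3)
    linear_combination (-(1 / h1) * (C1 / C2) * B * (1 / h1) * A * x) * key

/-- A partition viewed as an integer sequence. -/
def intSeq (lam : Ptn) : ℕ → ℤ := fun i => lam.1 i

lemma intSeq_injective : Function.Injective intSeq := by
  intro a b h
  apply Subtype.ext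
  funext i
  exact Int.ofNat_inj.1 (congrFun h i)

lemma intSeq_addBox (lam : Ptn) (i : ℕ) (h : Addable lam i) :
    intSeq (addBox lam i h) = intSeq lam + Pi.single i 1 := by
  funext p
  by_cases hp : p = i
  · subst hp; simp [intSeq, addBox]
  · simp [intSeq, addBox, hp]

lemma intSeq_remBox (lam : Ptn) (i : ℕ) (h : Removable lam i) :
    intSeq (remBox lam i h) = intSeq lam + Pi.single i (-1) := by
  have h' : lam.1 (i + 1) < lam.1 i := h
  funext p
  by_cases hp : p = i
  · subst hp
    simp only [intSeq, remBox, Function.update_self, Pi.add_apply, Pi.single_eq_same]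
    omega
  · simp [intSeq, remBox, hp]

lemma apply_eq_zero_of_plen_le {lam : Ptn} {p : ℕ} (h : plen lam ≤ p) : lam.1 p = 0 :=
  Nat.le_zero.1 ((lam.2.1 h).trans (Nat.find_spec lam.2.2).le)

lemma plen_le_of_apply_eq_zero {lam : Ptn} {p : ℕ} (h : lam.1 p = 0) : plen lam ≤ p :=
  Nat.find_min' lam.2.2 h

lemma plen_addBox_le (lam : Ptn) (i : ℕ) (h : Addable lam i) :
    plen (addBox lam i h) ≤ plen lam + 1 := by
  apply plen_le_of_apply_eq_zero
  have hi : i ≤ plen lam := by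
    by_contra hlt
    have := h (plen lam) (by omega)
    rw [apply_eq_zero_of_plen_le le_rfl] at this
    omega
  simp [addBox, show plen lam + 1 ≠ i by omega, apply_eq_zero_of_plen_le (Nat.le_succ (plen lam))]

lemma plen_remBox_le (lam : Ptn) (i : ℕ) (h : Removable lam i) :
    plen (remBox lam i h) ≤ plen lam := by
  apply plen_le_of_apply_eq_zero
  have h0 := apply_eq_zero_of_plen_le (le_refl (plen lam))
  have hi : plen lam ≠ i := by
    rintro rfl
    have h' : lam.1 (plen lam + 1) < lam.1 (plen lam) := h
    omega
  simp [remBox, hi, h0]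

lemma ecoef_one_eq_addCoef (lam : Ptn) (i : ℕ) :
    ecoef h1 h2 0 1 lam i = addCoef h1 h2 (intSeq lam) i := by
  rw [ecoef, addCoef]
  congr 1
  · congr 1
    refine Finset.prod_congr rfl fun p _ => ?_
    simp only [rowPos, intSeq]
    push_cast
    congr 1 <;> ring
  · simp [rowPos, intSeq]

lemma addCoef_eq_zero_of_not_addable {lam : Ptn} {i : ℕ} (h : ¬ Addable lam i) :
    addCoef h1 h2 (intSeq lam) i = 0 := by
  simp only [Addable, not_forall, not_lt] at h
  obtain ⟨p, hp, hle⟩ := h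
  obtain ⟨j, rfl⟩ : ∃ j, i = j + 1 := ⟨i - 1, by omega⟩
  have e : lam.1 (j + 1) = lam.1 j :=
    le_antisymm (lam.2.1 (Nat.le_succ j)) ((lam.2.1 (by omega : p ≤ j)).trans hle)
  rw [addCoef, Finset.prod_eq_zero (Finset.self_mem_range_succ j)]
  · simp
  · simp only [rowPos, intSeq, e]
    push_cast
    ring

lemma remCoef_eq_zero_of_not_removable {lam : Ptn} {N i : ℕ} (hN : plen lam ≤ N) (hi : i ≤ N)
    (h : ¬ Removable lam i) : remCoef h1 h2 N (intSeq lam) i = 0 := by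
  rcases hi.eq_or_lt with rfl | hlt
  · have e : ((i : ℂ) + 1) * h2 - rowPos h1 h2 (intSeq lam) i - h2 = 0 := by
      simp only [rowPos, intSeq, apply_eq_zero_of_plen_le hN]
      push_cast
      ring
    rw [remCoef, e, zero_div, mul_zero, zero_mul]
  · have e : lam.1 (i + 1) = lam.1 i := le_antisymm (lam.2.1 (Nat.le_succ i)) (not_lt.1 h)
    rw [remCoef, Finset.prod_eq_zero (Finset.mem_Icc.2 ⟨le_rfl, hlt⟩)]
    · simp
    · simp only [rowPos, intSeq, e]
      push_cast
      ring

lemma remCoef_succ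
    (hgen : ∀ a b : ℤ, ¬(a = 0 ∧ b = 0) → (a : ℂ) * h1 + (b : ℂ) * h2 ≠ 0)
    {a : ℕ → ℤ} {N i : ℕ} (hi : i ≤ N) (hN : a (N + 1) = 0) :
    remCoef h1 h2 (N + 1) a i = remCoef h1 h2 N a i := by
  have n0 := mul_sub_rowPos_add_ne_zero hgen a hi 0
  have n1 := mul_sub_rowPos_add_ne_zero hgen a hi 1
  have n2 := mul_sub_rowPos_add_ne_zero hgen a (hi.trans (Nat.le_succ N)) 1
  rw [remCoef, remCoef, Finset.prod_Icc_succ_top (by omega)]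
  have e : rowPos h1 h2 a (N + 1) = ((N : ℂ) + 1) * h2 := by simp [rowPos, hN]
  rw [e]
  generalize rowPos h1 h2 a i = x at *
  generalize (Finset.prod (Finset.Icc (i + 1) N) _ : ℂ) = A at *
  push_cast at *
  have m0 : x - (↑N + 1) * h2 ≠ 0 := fun h => n0 (by linear_combination -h)
  have m1 : x - (↑N + 1) * h2 - h1 ≠ 0 := fun h => n1 (by linear_combination -h)
  have n1' : (↑N + 1) * h2 - x + h1 ≠ 0 := fun h => n1 (by linear_combination h)
  have n2' : (↑N + 1 + 1) * h2 - x + h1 ≠ 0 := fun h => n2 (by linear_combination h)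
  have key : (((N : ℂ) + 1 + 1) * h2 - x - h2) / ((↑N + 1 + 1) * h2 - x + h1) *
      (((x - (↑N + 1) * h2 + h2) * (x - (↑N + 1) * h2 - h1 - h2)) /
        ((x - (↑N + 1) * h2) * (x - (↑N + 1) * h2 - h1))) =
      ((↑N + 1) * h2 - x - h2) / ((↑N + 1) * h2 - x + h1) := by
    rw [div_mul_div_comm, div_eq_div_iff (mul_ne_zero n2' (mul_ne_zero m0 m1)) n1']
    ring
  linear_combination (-(1 / h1) * A) * key

lemma fcoef_zero_eq_remCoef
    (hgen : ∀ a b : ℤ, ¬(a = 0 ∧ b = 0) → (a : ℂ) * h1 + (b : ℂ) * h2 ≠ 0)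
    {lam : Ptn} {N i : ℕ} (hN : plen lam ≤ N) (hi : i ≤ plen lam) :
    fcoef h1 h2 0 0 lam i = remCoef h1 h2 N (intSeq lam) i := by
  induction N, hN using Nat.le_induction with
  | succ N hN ih =>
    rw [ih, remCoef_succ hgen (hi.trans hN)]
    simp [intSeq, apply_eq_zero_of_plen_le (hN.trans (Nat.le_succ N))]
  | base =>
    have tele : ∀ M, i ≤ M →
        ((((lam.1 (i+1) : ℂ) - (lam.1 i : ℂ)) * h1)
          / ((((lam.1 (i+1) : ℂ) - (lam.1 i : ℂ)) + 1) * h1 + h2)) *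
        (∏ p ∈ Finset.Icc (i + 1) M,
          (((((lam.1 p : ℂ) - (lam.1 i : ℂ) + 1) * h1 + (((p : ℂ) - (i : ℂ)) + 1) * h2)
            * (((lam.1 (p+1) : ℂ) - (lam.1 i : ℂ)) * h1 + ((p : ℂ) - (i : ℂ)) * h2))
          / ((((lam.1 (p+1) : ℂ) - (lam.1 i : ℂ) + 1) * h1 + (((p : ℂ) - (i : ℂ)) + 1) * h2)
            * (((lam.1 p : ℂ) - (lam.1 i : ℂ)) * h1 + ((p : ℂ) - (i : ℂ)) * h2)))) =
        ((rowPos h1 h2 (intSeq lam) (M + 1) - rowPos h1 h2 (intSeq lam) i - h2) /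
          (rowPos h1 h2 (intSeq lam) (M + 1) - rowPos h1 h2 (intSeq lam) i + h1)) *
        ∏ p ∈ Finset.Icc (i + 1) M,
          ((rowPos h1 h2 (intSeq lam) i - rowPos h1 h2 (intSeq lam) p + h2) *
            (rowPos h1 h2 (intSeq lam) i - rowPos h1 h2 (intSeq lam) p - h1 - h2)) /
          ((rowPos h1 h2 (intSeq lam) i - rowPos h1 h2 (intSeq lam) p) *
            (rowPos h1 h2 (intSeq lam) i - rowPos h1 h2 (intSeq lam) p - h1)) := by
      intro M hM
      induction M, hM using Nat.le_induction with
      | base =>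
        simp only [rowPos, intSeq, lt_add_iff_pos_right, zero_lt_one, Finset.Icc_eq_empty_of_lt,
          Finset.prod_empty, mul_one]
        push_cast
        congr 1 <;> ring
      | succ M hM ih =>
        rw [Finset.prod_Icc_succ_top (by omega), Finset.prod_Icc_succ_top (by omega),
          ← mul_assoc, ih]
        have n1 := rowPos_sub_add_ne_zero hgen (intSeq lam) (by omega : M + 1 ≠ i) 0
        have n2 := rowPos_sub_add_ne_zero hgen (intSeq lam) (by omega : M + 1 ≠ i) 1
        have n3 := rowPos_sub_add_ne_zero hgen (intSeq lam) (by omega : M + 1 + 1 ≠ i) 1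
        have e1 : ((lam.1 (M + 1) : ℂ) - (lam.1 i : ℂ) + 1) * h1 +
            ((((M + 1 : ℕ) : ℂ) - (i : ℂ)) + 1) * h2 =
            rowPos h1 h2 (intSeq lam) (M + 1) - rowPos h1 h2 (intSeq lam) i + h1 + h2 := by
          simp only [rowPos, intSeq]; push_cast; ring
        have e2 : ((lam.1 (M + 1 + 1) : ℂ) - (lam.1 i : ℂ)) * h1 +
            (((M + 1 : ℕ) : ℂ) - (i : ℂ)) * h2 =
            rowPos h1 h2 (intSeq lam) (M + 1 + 1) - rowPos h1 h2 (intSeq lam) i - h2 := by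
          simp only [rowPos, intSeq]; push_cast; ring
        have e3 : ((lam.1 (M + 1 + 1) : ℂ) - (lam.1 i : ℂ) + 1) * h1 +
            ((((M + 1 : ℕ) : ℂ) - (i : ℂ)) + 1) * h2 =
            rowPos h1 h2 (intSeq lam) (M + 1 + 1) - rowPos h1 h2 (intSeq lam) i + h1 := by
          simp only [rowPos, intSeq]; push_cast; ring
        have e4 : ((lam.1 (M + 1) : ℂ) - (lam.1 i : ℂ)) * h1 +
            (((M + 1 : ℕ) : ℂ) - (i : ℂ)) * h2 =
            rowPos h1 h2 (intSeq lam) (M + 1) - rowPos h1 h2 (intSeq lam) i := by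
          simp only [rowPos, intSeq]; push_cast; ring
        rw [e1, e2, e3, e4]
        clear ih
        generalize (Finset.prod (Finset.Icc (i + 1) M) _ : ℂ) = A at *
        generalize rowPos h1 h2 (intSeq lam) (M + 1 + 1) = z at *
        generalize rowPos h1 h2 (intSeq lam) (M + 1) = y at *
        generalize rowPos h1 h2 (intSeq lam) i = x at *
        push_cast at *
        have m1 : y - x ≠ 0 := fun h => n1 (by linear_combination h)
        have m1' : x - y ≠ 0 := fun h => n1 (by linear_combination -h)
        have m2 : y - x + h1 ≠ 0 := fun h => n2 (by linear_combination h)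
        have m2' : x - y - h1 ≠ 0 := fun h => n2 (by linear_combination -h)
        have m3 : z - x + h1 ≠ 0 := fun h => n3 (by linear_combination h)
        have key : (y - x - h2) / (y - x + h1) *
            (((y - x + h1 + h2) * (z - x - h2)) / ((z - x + h1) * (y - x))) =
            (z - x - h2) / (z - x + h1) *
            (((x - y + h2) * (x - y - h1 - h2)) / ((x - y) * (x - y - h1))) := by
          rw [div_mul_div_comm, div_mul_div_comm, div_eq_div_iff
            (mul_ne_zero m2 (mul_ne_zero m3 m1)) (mul_ne_zero m3 (mul_ne_zero m1' m2'))]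
          ring
        linear_combination A * key
    have e : rowPos h1 h2 (intSeq lam) (plen lam + 1) = ((plen lam : ℂ) + 1) * h2 := by
      simp [rowPos, intSeq, apply_eq_zero_of_plen_le (Nat.le_succ (plen lam))]
    rw [fcoef, remCoef, pow_zero, mul_one, mul_assoc, mul_assoc, tele _ hi, e]

/-- The Fock space embedded into the free vector space on integer sequences. -/
def seqMap : FockSp →ₗ[ℂ] ((ℕ → ℤ) →₀ ℂ) := Finsupp.lmapDomain ℂ ℂ intSeq

lemma seqMap_single (lam : Ptn) (c : ℂ) :
    seqMap (Finsupp.single lam c) = Finsupp.single (intSeq lam) c := by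
  simp [seqMap]

lemma eOp_single (u : ℂ) (j : ℕ) (lam : Ptn) (c : ℂ) :
    eOp h1 h2 u j (Finsupp.single lam c) = c • evec h1 h2 u j lam := by
  simp [eOp]

lemma fOp_single (u : ℂ) (j : ℕ) (lam : Ptn) (c : ℂ) :
    fOp h1 h2 u j (Finsupp.single lam c) = c • fvec h1 h2 u j lam := by
  simp [fOp]

lemma evec_eq_sum_range (u : ℂ) (j : ℕ) {lam : Ptn} {n : ℕ} (hn : plen lam + 1 ≤ n) :
    evec h1 h2 u j lam = ∑ i ∈ Finset.range n,
      if h : Addable lam i then Finsupp.single (addBox lam i h) (ecoef h1 h2 u j lam i) else 0 := by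
  rw [evec]
  refine Finset.sum_subset (Finset.range_mono hn) fun i _ hi => dif_neg fun h => ?_
  have := h (plen lam) (by simpa using hi)
  rw [apply_eq_zero_of_plen_le le_rfl] at this
  omega

lemma fvec_eq_sum_range (u : ℂ) (j : ℕ) {lam : Ptn} {n : ℕ} (hn : plen lam ≤ n) :
    fvec h1 h2 u j lam = ∑ i ∈ Finset.range n,
      if h : Removable lam i then Finsupp.single (remBox lam i h) (fcoef h1 h2 u j lam i)
      else 0 := by
  rw [fvec]
  refine Finset.sum_subset (Finset.range_mono hn) fun i _ hi => dif_neg fun h => ?_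
  have h' : lam.1 (i + 1) < lam.1 i := h
  rw [apply_eq_zero_of_plen_le (by simpa using hi : plen lam ≤ i)] at h'
  omega

lemma seqMap_evec {lam : Ptn} {n : ℕ} (hn : plen lam + 1 ≤ n) :
    seqMap (evec h1 h2 0 1 lam) = ∑ i ∈ Finset.range n,
      Finsupp.single (intSeq lam + Pi.single i 1) (addCoef h1 h2 (intSeq lam) i) := by
  rw [evec_eq_sum_range 0 1 hn, map_sum]
  refine Finset.sum_congr rfl fun i _ => ?_
  split_ifs with h
  · rw [seqMap_single, intSeq_addBox, ecoef_one_eq_addCoef]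
  · rw [addCoef_eq_zero_of_not_addable h, Finsupp.single_zero, map_zero]

lemma fcoef_zero_eq_remCoef_of_removable
    (hgen : ∀ a b : ℤ, ¬(a = 0 ∧ b = 0) → (a : ℂ) * h1 + (b : ℂ) * h2 ≠ 0)
    {lam : Ptn} {N i : ℕ} (hN : plen lam ≤ N) (h : Removable lam i) :
    fcoef h1 h2 0 0 lam i = remCoef h1 h2 N (intSeq lam) i := by
  refine fcoef_zero_eq_remCoef hgen hN ?_
  by_contra hlt
  have h' : lam.1 (i + 1) < lam.1 i := h
  rw [apply_eq_zero_of_plen_le (by omega : plen lam ≤ i)] at h'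
  omega

lemma seqMap_fvec
    (hgen : ∀ a b : ℤ, ¬(a = 0 ∧ b = 0) → (a : ℂ) * h1 + (b : ℂ) * h2 ≠ 0)
    {lam : Ptn} {N : ℕ} (hN : plen lam ≤ N) :
    seqMap (fvec h1 h2 0 0 lam) = ∑ k ∈ Finset.range (N + 1),
      Finsupp.single (intSeq lam + Pi.single k (-1)) (remCoef h1 h2 N (intSeq lam) k) := by
  rw [fvec_eq_sum_range 0 0 (hN.trans (Nat.le_succ N)), map_sum]
  refine Finset.sum_congr rfl fun k hk => ?_
  split_ifs with h
  · rw [seqMap_single, intSeq_remBox, fcoef_zero_eq_remCoef_of_removable hgen hN h]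
  · rw [remCoef_eq_zero_of_not_removable hN (Nat.lt_succ_iff.1 (Finset.mem_range.1 hk)) h,
      Finsupp.single_zero, map_zero]

lemma seqMap_eOp_fOp_single
    (hgen : ∀ a b : ℤ, ¬(a = 0 ∧ b = 0) → (a : ℂ) * h1 + (b : ℂ) * h2 ≠ 0)
    {lam : Ptn} {N : ℕ} (hN : plen lam ≤ N) :
    seqMap (eOp h1 h2 0 1 (fOp h1 h2 0 0 (Finsupp.single lam 1))) =
      ∑ k ∈ Finset.range (N + 1), ∑ i ∈ Finset.range (N + 1),
        Finsupp.single (intSeq lam + Pi.single k (-1) + Pi.single i 1)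
          (remCoef h1 h2 N (intSeq lam) k *
            addCoef h1 h2 (intSeq lam + Pi.single k (-1)) i) := by
  rw [fOp_single, one_smul, fvec_eq_sum_range 0 0 (hN.trans (Nat.le_succ N)), map_sum, map_sum]
  refine Finset.sum_congr rfl fun k hk => ?_
  split_ifs with h
  · rw [eOp_single, map_smul,
      seqMap_evec (Nat.succ_le_succ ((plen_remBox_le lam k h).trans hN)), intSeq_remBox,
      fcoef_zero_eq_remCoef_of_removable hgen hN h, Finset.smul_sum]
    simp only [Finsupp.smul_single, smul_eq_mul]
  · simp [remCoef_eq_zero_of_not_removable hN (Nat.lt_succ_iff.1 (Finset.mem_range.1 hk)) h]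

lemma seqMap_fOp_eOp_single
    (hgen : ∀ a b : ℤ, ¬(a = 0 ∧ b = 0) → (a : ℂ) * h1 + (b : ℂ) * h2 ≠ 0)
    {lam : Ptn} {N : ℕ} (hN : plen lam + 1 ≤ N) :
    seqMap (fOp h1 h2 0 0 (eOp h1 h2 0 1 (Finsupp.single lam 1))) =
      ∑ i ∈ Finset.range (N + 1), ∑ k ∈ Finset.range (N + 1),
        Finsupp.single (intSeq lam + Pi.single i 1 + Pi.single k (-1))
          (addCoef h1 h2 (intSeq lam) i *
            remCoef h1 h2 N (intSeq lam + Pi.single i 1) k) := by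
  rw [eOp_single, one_smul, evec_eq_sum_range 0 1 (hN.trans (Nat.le_succ N)), map_sum, map_sum]
  refine Finset.sum_congr rfl fun i _ => ?_
  split_ifs with h
  · rw [fOp_single, map_smul, seqMap_fvec hgen ((plen_addBox_le lam i h).trans hN),
      intSeq_addBox, ecoef_one_eq_addCoef, Finset.smul_sum]
    simp only [Finsupp.smul_single, smul_eq_mul]
  · simp [addCoef_eq_zero_of_not_addable h]

end Generic

lemma sum_sum_eq_of_diagonal {M : Type*} [AddCommMonoid M] (n : ℕ)
    (g g' : ℕ → ℕ → M) (hoff : ∀ i < n, ∀ k < n, i ≠ k → g k i = g' k i)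
    (hdiag : ∑ k ∈ Finset.range n, g k k = ∑ k ∈ Finset.range n, g' k k) :
    ∑ k ∈ Finset.range n, ∑ i ∈ Finset.range n, g k i =
      ∑ k ∈ Finset.range n, ∑ i ∈ Finset.range n, g' k i := by
  have split : ∀ q : ℕ → ℕ → M, ∑ k ∈ Finset.range n, ∑ i ∈ Finset.range n, q k i =
      ∑ k ∈ Finset.range n, q k k +
        ∑ k ∈ Finset.range n, ∑ i ∈ (Finset.range n).erase k, q k i := by
    intro q
    rw [← Finset.sum_add_distrib]
    exact Finset.sum_congr rfl fun k hk => (Finset.add_sum_erase _ _ hk).symm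
  rw [split, split, hdiag]
  congr 1
  refine Finset.sum_congr rfl fun k hk => Finset.sum_congr rfl fun i hi => ?_
  exact hoff i (Finset.mem_range.1 (Finset.mem_of_mem_erase hi)) k (Finset.mem_range.1 hk)
    (Finset.ne_of_mem_erase hi)

end Fock

open Fock

/-- For the Fock module of the affine Yangian of `gl_1` (with `u = 0`
and generic `h1, h2`), the operator `[e_1, f_0]` is zero. -/
theorem fock_e1_f0_commutator (h1 h2 : ℂ)
    (hgen : ∀ a b : ℤ, ¬(a = 0 ∧ b = 0) → (a : ℂ) * h1 + (b : ℂ) * h2 ≠ 0) :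
    eOp h1 h2 0 1 * fOp h1 h2 0 0 - fOp h1 h2 0 0 * eOp h1 h2 0 1 = 0 := by
  suffices h : eOp h1 h2 0 1 * fOp h1 h2 0 0 = fOp h1 h2 0 0 * eOp h1 h2 0 1 by
    rw [h]; exact sub_self (G := Module.End ℂ FockSp) _
  refine Finsupp.lhom_ext' fun lam => LinearMap.ext_ring ?_
  apply Finsupp.mapDomain_injective intSeq_injective
  change seqMap (eOp h1 h2 0 1 (fOp h1 h2 0 0 (Finsupp.single lam 1))) =
    seqMap (fOp h1 h2 0 0 (eOp h1 h2 0 1 (Finsupp.single lam 1)))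
  rw [seqMap_eOp_fOp_single hgen (N := plen lam + 1) (Nat.le_succ _),
    seqMap_fOp_eOp_single hgen le_rfl]
  refine Eq.trans ?_ Finset.sum_comm
  apply sum_sum_eq_of_diagonal
  · intro i hi k _ hik
    rw [remCoef_mul_addCoef_comm hgen _ (Nat.lt_succ_iff.1 hi) hik, add_right_comm]
  · have hs : ∀ k : ℕ, intSeq lam + Pi.single k 1 + Pi.single k (-1) = intSeq lam := by
      intro k
      rw [add_assoc, ← Pi.single_add]
      simp
    have hs' : ∀ k : ℕ, intSeq lam + Pi.single k (-1) + Pi.single k 1 = intSeq lam := by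
      intro k
      rw [add_right_comm, hs]
    simp only [hs, hs', ← Finsupp.single_finsetSum]
    rw [sum_diagonal_eq hgen]
    simp [intSeq, apply_eq_zero_of_plen_le (Nat.le_succ (plen lam))]

end
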